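/- arXiv:2312.05980 — 2 statements merged into one kernel-verified Lean document; each statement's English description precedes it below -/
import Mathlib

section
/- Opening a station next to an OD vertex carrying impossible demand increases the satisfied demand by exactly the captured amount: suppose v₀ ∈ O is isolated in M (no s ∈ S with (v₀, s) ∈ M), and let s₀ ∉ S be a new station with capacity C₀ ≥ 0 adjacent only to v₀. Then the satisfied demand of the network with station set S ∪ {s₀}, edge set M ∪ {(v₀, s₀)}, and capacity function extending C by C_{s₀} = C₀ equals OPT(T, O, S, M, A, C) + Σ_{t∈T} min(A^t_{v₀}, C₀). In particular, the satisfied demand strictly increases whenever C₀ > 0 and A^t_{v₀} > 0 for some t ∈ T. -/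
open Finset

/-- Feasibility of a flow `(a, b, c)` in the demand-assignment network
`(T, O, S, M, A, C)`. -/
def IsFeasible {ι α β : Type*} [DecidableEq α] [DecidableEq β]
    (T : Finset ι) (O : Finset α) (S : Finset β) (M : Finset (α × β))
    (A : ι → α → ℝ) (C : β → ℝ)
    (a : ι → α → ℝ) (b : ι → α × β → ℝ) (c : ι → β → ℝ) : Prop :=
  ∀ t ∈ T,
    (∀ p : α × β, p ∉ M → b t p = 0) ∧
    (∀ v ∈ O, a t v = ∑ s ∈ S.filter (fun s => (v, s) ∈ M), b t (v, s)) ∧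
    (∀ s ∈ S, ∑ v ∈ O.filter (fun v => (v, s) ∈ M), b t (v, s) = c t s) ∧
    (∀ v ∈ O, 0 ≤ a t v ∧ a t v ≤ A t v) ∧
    (∀ p : α × β, 0 ≤ b t p) ∧
    (∀ s ∈ S, 0 ≤ c t s ∧ c t s ≤ C s)

/-- The value of a flow: total flow leaving the source. -/
def flowValue {ι α : Type*} (T : Finset ι) (O : Finset α) (a : ι → α → ℝ) : ℝ :=
  ∑ t ∈ T, ∑ v ∈ O, a t v

/-- The satisfied demand: supremum of the values of feasible flows. -/
noncomputable def OPT {ι α β : Type*} [DecidableEq α] [DecidableEq β]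
    (T : Finset ι) (O : Finset α) (S : Finset β) (M : Finset (α × β))
    (A : ι → α → ℝ) (C : β → ℝ) : ℝ :=
  sSup {x : ℝ | ∃ a b c, IsFeasible T O S M A C a b c ∧ x = flowValue T O a}

/-!
The functions `a` and `c` of a feasible flow are the marginals of `b`, so `OPT` is a supremum over
the assignments `b` alone. If two edge sets share neither an OD vertex nor a station, then adding
assignments and restricting them to one of the edge sets show that the set of values attained on
the union is the pointwise sum of the two sets of values; hence `OPT` is additive. The new edge
`(v₀, s₀)` shares no endpoint with `M`, and on its own it carries at most `min (A t v₀) C₀` in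
period `t`.
-/

section Assignment

variable {ι α β : Type*}

/-- A one-period assignment on the edges `M`: the middle component `b` of a feasible flow in a
single period, with demands `A` and capacities `C`. The flow is determined by it, since its
other two components are the marginals of `b`. -/
structure IsAssignment (O : Finset α) (S : Finset β) (M : Finset (α × β))
    (A : α → ℝ) (C : β → ℝ) (b : α × β → ℝ) : Prop where
  eq_zero : ∀ p ∉ M, b p = 0
  nonneg : 0 ≤ b
  sum_le_demand : ∀ v ∈ O, ∑ s ∈ S, b (v, s) ≤ A v
  sum_le_capacity : ∀ s ∈ S, ∑ v ∈ O, b (v, s) ≤ C s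

/-- The set of total flows of families of assignments, one for each period in `T`; its supremum
is the satisfied demand. -/
def assignmentValues (T : Finset ι) (O : Finset α) (S : Finset β) (M : Finset (α × β))
    (A : ι → α → ℝ) (C : β → ℝ) : Set ℝ :=
  (fun b : ι → α × β → ℝ => ∑ t ∈ T, ∑ p ∈ O ×ˢ S, b t p) ''
    {b | ∀ t ∈ T, IsAssignment O S M (A t) C (b t)}

namespace IsAssignment

variable {O : Finset α} {S S' : Finset β} {M M' M₁ M₂ : Finset (α × β)} {A : α → ℝ}
  {C C' : β → ℝ} {b b' b₁ b₂ : α × β → ℝ} {v₀ : α} {s₀ : β}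

theorem zero (hA : ∀ v ∈ O, 0 ≤ A v) (hC : ∀ s ∈ S, 0 ≤ C s) : IsAssignment O S M A C 0 where
  eq_zero _ _ := rfl
  nonneg := le_rfl
  sum_le_demand v hv := by simpa using hA v hv
  sum_le_capacity s hs := by simpa using hC s hs

theorem of_le (h : IsAssignment O S M A C b) (hzero : ∀ p ∉ M', b' p = 0) (hnonneg : 0 ≤ b')
    (hle : b' ≤ b) : IsAssignment O S M' A C b' where
  eq_zero := hzero
  nonneg := hnonneg
  sum_le_demand v hv := (sum_le_sum fun s _ => hle (v, s)).trans (h.sum_le_demand v hv)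
  sum_le_capacity s hs := (sum_le_sum fun v _ => hle (v, s)).trans (h.sum_le_capacity s hs)

theorem sum_le_sum_demand (h : IsAssignment O S M A C b) :
    ∑ p ∈ O ×ˢ S, b p ≤ ∑ v ∈ O, A v := by
  rw [sum_product]
  exact sum_le_sum h.sum_le_demand

theorem le_demand (h : IsAssignment O S M A C b) (hv₀ : v₀ ∈ O) (hs₀ : s₀ ∈ S) :
    b (v₀, s₀) ≤ A v₀ :=
  (single_le_sum (f := fun s => b (v₀, s)) (fun _ _ => h.nonneg _) hs₀).trans
    (h.sum_le_demand v₀ hv₀)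

theorem le_capacity (h : IsAssignment O S M A C b) (hv₀ : v₀ ∈ O) (hs₀ : s₀ ∈ S) :
    b (v₀, s₀) ≤ C s₀ :=
  (single_le_sum (f := fun v => b (v, s₀)) (fun _ _ => h.nonneg _) hv₀).trans
    (h.sum_le_capacity s₀ hs₀)

theorem sum_eq_of_subset (h : IsAssignment O S M A C b) (hS : S ⊆ S')
    (hM : ∀ p ∈ M, p.2 ∈ S) : ∑ p ∈ O ×ˢ S', b p = ∑ p ∈ O ×ˢ S, b p := by
  refine (sum_subset (product_subset_product_right hS) fun p hp hpS => ?_).symm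
  exact h.eq_zero p fun hpM => hpS (mem_product.2 ⟨(mem_product.1 hp).1, hM p hpM⟩)

theorem iff_of_subset (hS : S ⊆ S') (hM : ∀ p ∈ M, p.2 ∈ S) (hC' : ∀ s ∈ S', 0 ≤ C' s)
    (hCC' : ∀ s ∈ S, C' s = C s) : IsAssignment O S' M A C' b ↔ IsAssignment O S M A C b := by
  have hsum (hb : ∀ p ∉ M, b p = 0) (v : α) : ∑ s ∈ S, b (v, s) = ∑ s ∈ S', b (v, s) :=
    sum_subset hS fun s _ hs => hb _ fun hvs => hs (hM _ hvs)
  constructor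
  · intro h
    refine ⟨h.eq_zero, h.nonneg, fun v hv => ?_, fun s hs => ?_⟩
    · exact (hsum h.eq_zero v).trans_le (h.sum_le_demand v hv)
    · exact (h.sum_le_capacity s (hS hs)).trans_eq (hCC' s hs)
  · intro h
    refine ⟨h.eq_zero, h.nonneg, fun v hv => ?_, fun s hs => ?_⟩
    · exact (hsum h.eq_zero v).symm.trans_le (h.sum_le_demand v hv)
    · by_cases hsS : s ∈ S
      · exact (h.sum_le_capacity s hsS).trans_eq (hCC' s hsS).symm
      · rw [sum_eq_zero fun v _ => h.eq_zero _ fun hvs => hsS (hM _ hvs)]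
        exact hC' s hs

theorem sum_eq_zero_of_notMem_image_fst [DecidableEq α] (h : IsAssignment O S M A C b) {v : α}
    (hv : v ∉ M.image Prod.fst) : ∑ s ∈ S, b (v, s) = 0 :=
  sum_eq_zero fun _ _ => h.eq_zero _ fun hvs => hv (mem_image_of_mem Prod.fst hvs)

theorem sum_eq_zero_of_notMem_image_snd [DecidableEq β] (h : IsAssignment O S M A C b) {s : β}
    (hs : s ∉ M.image Prod.snd) : ∑ v ∈ O, b (v, s) = 0 :=
  sum_eq_zero fun _ _ => h.eq_zero _ fun hvs => hs (mem_image_of_mem Prod.snd hvs)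

variable [DecidableEq α] [DecidableEq β]

theorem add (h₁ : IsAssignment O S M₁ A C b₁) (h₂ : IsAssignment O S M₂ A C b₂)
    (hfst : Disjoint (M₁.image Prod.fst) (M₂.image Prod.fst))
    (hsnd : Disjoint (M₁.image Prod.snd) (M₂.image Prod.snd)) :
    IsAssignment O S (M₁ ∪ M₂) A C (b₁ + b₂) where
  eq_zero p hp := by
    rw [mem_union, not_or] at hp
    simp [h₁.eq_zero p hp.1, h₂.eq_zero p hp.2]
  nonneg p := add_nonneg (h₁.nonneg p) (h₂.nonneg p)
  sum_le_demand v hv := by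
    simp only [Pi.add_apply, sum_add_distrib]
    by_cases hvM : v ∈ M₁.image Prod.fst
    · rw [h₂.sum_eq_zero_of_notMem_image_fst (disjoint_left.1 hfst hvM), add_zero]
      exact h₁.sum_le_demand v hv
    · rw [h₁.sum_eq_zero_of_notMem_image_fst hvM, zero_add]
      exact h₂.sum_le_demand v hv
  sum_le_capacity s hs := by
    simp only [Pi.add_apply, sum_add_distrib]
    by_cases hsM : s ∈ M₁.image Prod.snd
    · rw [h₂.sum_eq_zero_of_notMem_image_snd (disjoint_left.1 hsnd hsM), add_zero]
      exact h₁.sum_le_capacity s hs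
    · rw [h₁.sum_eq_zero_of_notMem_image_snd hsM, zero_add]
      exact h₂.sum_le_capacity s hs

theorem exists_add_eq (h : IsAssignment O S (M₁ ∪ M₂) A C b) :
    ∃ b₁ b₂, IsAssignment O S M₁ A C b₁ ∧ IsAssignment O S M₂ A C b₂ ∧ b₁ + b₂ = b := by
  have hind (s : Set (α × β)) : 0 ≤ s.indicator b ∧ s.indicator b ≤ b :=
    ⟨Set.indicator_nonneg fun p _ => h.nonneg p, Set.indicator_le_self' fun p _ => h.nonneg p⟩
  refine ⟨(M₁ : Set (α × β)).indicator b, (M₁ : Set (α × β))ᶜ.indicator b,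
    h.of_le (fun p hp => Set.indicator_of_notMem hp b) (hind _).1 (hind _).2,
    h.of_le (fun p hp => ?_) (hind _).1 (hind _).2, Set.indicator_self_add_compl _ b⟩
  by_cases hpM : p ∈ M₁
  · exact Set.indicator_of_notMem (Set.notMem_compl_iff.2 hpM) b
  · rw [Set.indicator_of_mem (by simpa using hpM)]
    exact h.eq_zero p (by simp [hp, hpM])

theorem single {x : ℝ} (hA : ∀ v ∈ O, 0 ≤ A v) (hC : ∀ s ∈ S, 0 ≤ C s)
    (hx : 0 ≤ x) (hxA : x ≤ A v₀) (hxC : x ≤ C s₀) :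
    IsAssignment O S {(v₀, s₀)} A C (Pi.single (v₀, s₀) x) where
  eq_zero p hp := by rw [Pi.single_apply, if_neg (mt mem_singleton.2 hp)]
  nonneg := Pi.single_nonneg.2 hx
  sum_le_demand v hv := by
    by_cases h : v = v₀
    · subst h
      simp only [Pi.single_apply, Prod.mk.injEq, true_and, sum_ite_eq']
      split_ifs
      exacts [hxA, hA v hv]
    · simpa [Pi.single_apply, h] using hA v hv
  sum_le_capacity s hs := by
    by_cases h : s = s₀
    · subst h
      simp only [Pi.single_apply, Prod.mk.injEq, and_true, sum_ite_eq']
      split_ifs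
      exacts [hxC, hC s hs]
    · simpa [Pi.single_apply, h] using hC s hs

end IsAssignment

section Values

variable {T : Finset ι} {O : Finset α} {S S' : Finset β} {M M₁ M₂ : Finset (α × β)}
  {A : ι → α → ℝ} {C C' : β → ℝ}

theorem assignmentValues_nonempty (hA : ∀ t ∈ T, ∀ v ∈ O, 0 ≤ A t v) (hC : ∀ s ∈ S, 0 ≤ C s) :
    (assignmentValues T O S M A C).Nonempty :=
  Set.Nonempty.image _ ⟨0, fun t ht => IsAssignment.zero (hA t ht) hC⟩

theorem bddAbove_assignmentValues : BddAbove (assignmentValues T O S M A C) := by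
  refine ⟨∑ t ∈ T, ∑ v ∈ O, A t v, ?_⟩
  rintro _ ⟨b, hb, rfl⟩
  exact sum_le_sum fun t ht => (hb t ht).sum_le_sum_demand

theorem assignmentValues_eq_of_subset (hS : S ⊆ S') (hM : ∀ p ∈ M, p.2 ∈ S)
    (hC' : ∀ s ∈ S', 0 ≤ C' s) (hCC' : ∀ s ∈ S, C' s = C s) :
    assignmentValues T O S' M A C' = assignmentValues T O S M A C := by
  have hiff (b : ι → α × β → ℝ) : (∀ t ∈ T, IsAssignment O S' M (A t) C' (b t)) ↔
      ∀ t ∈ T, IsAssignment O S M (A t) C (b t) :=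
    forall₂_congr fun _ _ => IsAssignment.iff_of_subset hS hM hC' hCC'
  simp only [assignmentValues, hiff]
  exact Set.image_congr fun b hb => sum_congr rfl fun t ht => (hb t ht).sum_eq_of_subset hS hM

open scoped Pointwise in
theorem assignmentValues_union [DecidableEq α] [DecidableEq β]
    (hfst : Disjoint (M₁.image Prod.fst) (M₂.image Prod.fst))
    (hsnd : Disjoint (M₁.image Prod.snd) (M₂.image Prod.snd)) :
    assignmentValues T O S (M₁ ∪ M₂) A C =
      assignmentValues T O S M₁ A C + assignmentValues T O S M₂ A C := by
  apply Set.Subset.antisymm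
  · rintro _ ⟨b, hb, rfl⟩
    choose! b₁ b₂ h₁ h₂ hadd using fun t ht => (hb t ht).exists_add_eq
    refine ⟨_, ⟨b₁, h₁, rfl⟩, _, ⟨b₂, h₂, rfl⟩, ?_⟩
    simp only [← sum_add_distrib]
    exact sum_congr rfl fun t ht => sum_congr rfl fun p _ => congrFun (hadd t ht) p
  · rintro _ ⟨_, ⟨b₁, h₁, rfl⟩, _, ⟨b₂, h₂, rfl⟩, rfl⟩
    refine ⟨b₁ + b₂, fun t ht => (h₁ t ht).add (h₂ t ht) hfst hsnd, ?_⟩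
    simp only [Pi.add_apply, sum_add_distrib]

theorem isGreatest_assignmentValues_singleton {v₀ : α} {s₀ : β}
    (hA : ∀ t ∈ T, ∀ v ∈ O, 0 ≤ A t v) (hC : ∀ s ∈ S, 0 ≤ C s) (hv₀ : v₀ ∈ O) (hs₀ : s₀ ∈ S) :
    IsGreatest (assignmentValues T O S {(v₀, s₀)} A C) (∑ t ∈ T, min (A t v₀) (C s₀)) := by
  classical
  have hmem : (v₀, s₀) ∈ O ×ˢ S := mk_mem_product hv₀ hs₀
  constructor
  · refine ⟨fun t => Pi.single (v₀, s₀) (min (A t v₀) (C s₀)), fun t ht => ?_, ?_⟩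
    · exact .single (hA t ht) hC (le_min (hA t ht v₀ hv₀) (hC s₀ hs₀))
        (min_le_left _ _) (min_le_right _ _)
    · simp only [sum_pi_single', if_pos hmem]
  · rintro _ ⟨b, hb, rfl⟩
    refine sum_le_sum fun t ht => ?_
    rw [sum_eq_single_of_mem (v₀, s₀) hmem fun p _ hp => (hb t ht).eq_zero p (by simpa using hp)]
    exact le_min ((hb t ht).le_demand hv₀ hs₀) ((hb t ht).le_capacity hv₀ hs₀)

end Values

section SatisfiedDemand

variable [DecidableEq α] [DecidableEq β] {T : Finset ι} {O : Finset α} {S S' : Finset β}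
  {M M₁ M₂ : Finset (α × β)} {A : ι → α → ℝ} {C C' : β → ℝ}

theorem isFeasible_iff {a : ι → α → ℝ} {b : ι → α × β → ℝ} {c : ι → β → ℝ} :
    IsFeasible T O S M A C a b c ↔ ∀ t ∈ T, IsAssignment O S M (A t) C (b t) ∧
      (∀ v ∈ O, a t v = ∑ s ∈ S, b t (v, s)) ∧ ∀ s ∈ S, c t s = ∑ v ∈ O, b t (v, s) := by
  refine forall₂_congr fun t _ => ?_
  have hrow (hb : ∀ p ∉ M, b t p = 0) (v : α) :
      ∑ s ∈ S with (v, s) ∈ M, b t (v, s) = ∑ s ∈ S, b t (v, s) :=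
    sum_filter_of_ne fun s _ => not_imp_comm.1 (hb (v, s))
  have hcol (hb : ∀ p ∉ M, b t p = 0) (s : β) :
      ∑ v ∈ O with (v, s) ∈ M, b t (v, s) = ∑ v ∈ O, b t (v, s) :=
    sum_filter_of_ne fun v _ => not_imp_comm.1 (hb (v, s))
  constructor
  · rintro ⟨hzero, ha, hc, haA, hnonneg, hcC⟩
    simp only [hrow hzero] at ha
    simp only [hcol hzero] at hc
    exact ⟨⟨hzero, hnonneg, fun v hv => ha v hv ▸ (haA v hv).2,
      fun s hs => hc s hs ▸ (hcC s hs).2⟩, ha, fun s hs => (hc s hs).symm⟩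
  · rintro ⟨hb, ha, hc⟩
    simp only [hrow hb.eq_zero, hcol hb.eq_zero]
    refine ⟨hb.eq_zero, ha, fun s hs => (hc s hs).symm, fun v hv => ?_, hb.nonneg, fun s hs => ?_⟩
    · rw [ha v hv]
      exact ⟨sum_nonneg fun _ _ => hb.nonneg _, hb.sum_le_demand v hv⟩
    · rw [hc s hs]
      exact ⟨sum_nonneg fun _ _ => hb.nonneg _, hb.sum_le_capacity s hs⟩

theorem OPT_eq_sSup_assignmentValues :
    OPT T O S M A C = sSup (assignmentValues T O S M A C) := by
  refine congrArg sSup (Set.Subset.antisymm ?_ ?_)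
  · rintro _ ⟨a, b, c, h, rfl⟩
    rw [isFeasible_iff] at h
    refine ⟨b, fun t ht => (h t ht).1, sum_congr rfl fun t ht => ?_⟩
    rw [sum_product]
    exact sum_congr rfl fun v hv => ((h t ht).2.1 v hv).symm
  · rintro _ ⟨b, hb, rfl⟩
    refine ⟨fun t v => ∑ s ∈ S, b t (v, s), b, fun t s => ∑ v ∈ O, b t (v, s),
      isFeasible_iff.2 fun t ht => ⟨hb t ht, fun _ _ => rfl, fun _ _ => rfl⟩, ?_⟩
    simp only [flowValue, sum_product]

theorem OPT_eq_of_subset (hS : S ⊆ S') (hM : ∀ p ∈ M, p.2 ∈ S)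
    (hC' : ∀ s ∈ S', 0 ≤ C' s) (hCC' : ∀ s ∈ S, C' s = C s) :
    OPT T O S' M A C' = OPT T O S M A C := by
  simp only [OPT_eq_sSup_assignmentValues, assignmentValues_eq_of_subset hS hM hC' hCC']

theorem OPT_union (hA : ∀ t ∈ T, ∀ v ∈ O, 0 ≤ A t v) (hC : ∀ s ∈ S, 0 ≤ C s)
    (hfst : Disjoint (M₁.image Prod.fst) (M₂.image Prod.fst))
    (hsnd : Disjoint (M₁.image Prod.snd) (M₂.image Prod.snd)) :
    OPT T O S (M₁ ∪ M₂) A C = OPT T O S M₁ A C + OPT T O S M₂ A C := by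
  simp only [OPT_eq_sSup_assignmentValues, assignmentValues_union hfst hsnd]
  exact csSup_add (assignmentValues_nonempty hA hC) bddAbove_assignmentValues
    (assignmentValues_nonempty hA hC) bddAbove_assignmentValues

theorem OPT_singleton {v₀ : α} {s₀ : β} (hA : ∀ t ∈ T, ∀ v ∈ O, 0 ≤ A t v)
    (hC : ∀ s ∈ S, 0 ≤ C s) (hv₀ : v₀ ∈ O) (hs₀ : s₀ ∈ S) :
    OPT T O S {(v₀, s₀)} A C = ∑ t ∈ T, min (A t v₀) (C s₀) :=
  OPT_eq_sSup_assignmentValues.trans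
    (isGreatest_assignmentValues_singleton hA hC hv₀ hs₀).csSup_eq

end SatisfiedDemand

end Assignment

/-- Opening a station next to an OD vertex carrying impossible demand increases the
satisfied demand by exactly the captured amount, and strictly increases it whenever
the new capacity and some period's demand at that vertex are positive. -/
theorem stmt7
    {ι α β : Type*} [DecidableEq α] [DecidableEq β]
    (T : Finset ι) (O : Finset α) (S : Finset β) (M : Finset (α × β))
    (A : ι → α → ℝ) (C : β → ℝ)
    (hT : T.Nonempty) (hM : M ⊆ O ×ˢ S)
    (hA : ∀ t ∈ T, ∀ v ∈ O, 0 ≤ A t v) (hC : ∀ s ∈ S, 0 ≤ C s)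
    (v₀ : α) (hv₀ : v₀ ∈ O) (hiso : ∀ s ∈ S, (v₀, s) ∉ M)
    (s₀ : β) (hs₀ : s₀ ∉ S) (C₀ : ℝ) (hC₀ : 0 ≤ C₀) :
    OPT T O (insert s₀ S) (insert (v₀, s₀) M) A (Function.update C s₀ C₀) =
        OPT T O S M A C + ∑ t ∈ T, min (A t v₀) C₀ ∧
      ((0 < C₀ ∧ ∃ t ∈ T, 0 < A t v₀) →
        OPT T O S M A C <
          OPT T O (insert s₀ S) (insert (v₀, s₀) M) A (Function.update C s₀ C₀)) := by
  set C' := Function.update C s₀ C₀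
  have hC's₀ : C' s₀ = C₀ := Function.update_self ..
  have hCC' : ∀ s ∈ S, C' s = C s := fun s hs =>
    Function.update_of_ne (ne_of_mem_of_not_mem hs hs₀) ..
  have hC' : ∀ s ∈ insert s₀ S, 0 ≤ C' s :=
    forall_mem_insert .. |>.2 ⟨hC's₀ ▸ hC₀, fun s hs => hCC' s hs ▸ hC s hs⟩
  have hMS : ∀ p ∈ M, p.2 ∈ S := fun p hp => (mem_product.1 (hM hp)).2
  have hfst : Disjoint (M.image Prod.fst) (image Prod.fst {(v₀, s₀)}) := by
    simpa using fun s hs => hiso s (hMS _ hs) hs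
  have hsnd : Disjoint (M.image Prod.snd) (image Prod.snd {(v₀, s₀)}) := by
    simpa using fun v hv => hs₀ (hMS _ hv)
  have hOPT : OPT T O (insert s₀ S) (insert (v₀, s₀) M) A C' =
      OPT T O S M A C + ∑ t ∈ T, min (A t v₀) C₀ := by
    rw [insert_eq (v₀, s₀) M, union_comm, OPT_union hA hC' hfst hsnd,
      OPT_eq_of_subset (subset_insert s₀ S) hMS hC' hCC',
      OPT_singleton hA hC' hv₀ (mem_insert_self s₀ S), hC's₀]
  refine ⟨hOPT, fun ⟨hC₀_pos, t, ht, hAt⟩ => ?_⟩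
  rw [hOPT, lt_add_iff_pos_right]
  exact sum_pos' (fun t ht => le_min (hA t ht v₀ hv₀) hC₀) ⟨t, ht, lt_min hAt hC₀_pos⟩
end

section
/- The single-period time-aggregated relaxation of the location-and-sizing problem overestimates its multi-period optimal value: for every expansion decision feasible for budget G, the multi-period satisfied demand of the corresponding expanded network is at most the satisfied demand of the single-period network obtained from the same expanded network by taking demands Ā_v = Σ_{t∈T} A^t_v and multiplying all station capacities by |T|; consequently, OPT_MILP(G) is at most the optimal value of the location-and-sizing problem for this single-period aggregated instance with the same budget G. -/
open Finset

/-- Feasibility of an expansion decision `(x, y2, y3, z2, z3)` for budget `G`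
(`z2 e, z3 e ∈ {0,1}` is enforced by `z2 e + z3 e ≤ 1` together with ℕ-valuedness;
for pure binaries one also has `z2 e ≤ 1` and `z3 e ≤ 1` as consequences). -/
def ExpFeasible {β : Type*} [DecidableEq β]
    (S S₂ : Finset β) (C P : β → ℝ) (Y : β → ℕ) (Y2 Y3 : ℕ)
    (K I2 I3 J2 J3 : β → ℝ) (G : ℝ)
    (x y2 y3 z2 z3 : β → ℕ) : Prop :=
  (∀ s ∈ S, (x s : ℝ) ≤ (Y s : ℝ) - C s / P s) ∧
  (∀ e ∈ S₂, y2 e ≤ Y2 * z2 e) ∧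
  (∀ e ∈ S₂, y3 e ≤ Y3 * z3 e) ∧
  (∀ e ∈ S₂, z2 e + z3 e ≤ 1) ∧
  ∑ e ∈ S₂, (I2 e * (y2 e : ℝ) + J2 e * (z2 e : ℝ) + I3 e * (y3 e : ℝ) + J3 e * (z3 e : ℝ)) +
      ∑ s ∈ S, K s * (x s : ℝ) ≤ G

/-- Capacities of the expanded network: `C s + P s * x s` for existing stations `s ∈ S`,
and `Q2 * y2 e + Q3 * y3 e` for new stations. -/
def expCap {β : Type*} [DecidableEq β] (S : Finset β) (C P : β → ℝ) (Q2 Q3 : ℝ)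
    (x y2 y3 : β → ℕ) : β → ℝ :=
  fun s => if s ∈ S then C s + P s * (x s : ℝ) else Q2 * (y2 s : ℝ) + Q3 * (y3 s : ℝ)

/-- Optimal value of the location-and-sizing problem with budget `G`: supremum over
feasible expansion decisions of the satisfied demand of the expanded network. -/
noncomputable def OPTMILP {ι α β : Type*} [DecidableEq α] [DecidableEq β]
    (T : Finset ι) (O : Finset α) (S : Finset β) (M : Finset (α × β))
    (A : ι → α → ℝ) (C : β → ℝ)
    (S₂ : Finset β) (M₂ : Finset (α × β))
    (P : β → ℝ) (Q2 Q3 : ℝ) (Y : β → ℕ) (Y2 Y3 : ℕ)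
    (K I2 I3 J2 J3 : β → ℝ) (G : ℝ) : ℝ :=
  sSup {w : ℝ | ∃ x y2 y3 z2 z3,
    ExpFeasible S S₂ C P Y Y2 Y3 K I2 I3 J2 J3 G x y2 y3 z2 z3 ∧
    w = OPT T O (S ∪ S₂) (M ∪ M₂) A (expCap S C P Q2 Q3 x y2 y3)}

/-!
Summing a multi-period flow over the periods gives a single-period flow of the same value, feasible
for the summed demands and for `|T|` times the capacities. Multiplying `C`, `P`, `Q2` and `Q3` by
`|T|` leaves the ratios `C s / P s`, hence the feasible expansion decisions, unchanged and
multiplies the expanded capacities by `|T|`, so every decision can be compared with itself.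
-/

theorem flowValue_singleton_sum_periods {ι κ α : Type*} (T : Finset ι) (O : Finset α)
    (a : ι → α → ℝ) (t₀ : κ) :
    flowValue {t₀} O (fun _ v => ∑ t ∈ T, a t v) = flowValue T O a :=
  (sum_singleton _ _).trans sum_comm

section Flow

variable {ι α β : Type*} [DecidableEq α] [DecidableEq β] {T : Finset ι} {O : Finset α}
  {S : Finset β} {M : Finset (α × β)} {A : ι → α → ℝ} {C : β → ℝ}
  {a : ι → α → ℝ} {b : ι → α × β → ℝ} {c : ι → β → ℝ}

theorem IsFeasible.flowValue_nonneg (h : IsFeasible T O S M A C a b c) :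
    0 ≤ flowValue T O a :=
  sum_nonneg fun t ht => sum_nonneg fun v hv =>
    have ⟨_, _, _, ha, _, _⟩ := h t ht
    (ha v hv).1

theorem IsFeasible.flowValue_le_sum_demand (h : IsFeasible T O S M A C a b c) :
    flowValue T O a ≤ ∑ t ∈ T, ∑ v ∈ O, A t v :=
  sum_le_sum fun t ht => sum_le_sum fun v hv =>
    have ⟨_, _, _, ha, _, _⟩ := h t ht
    (ha v hv).2

theorem IsFeasible.flowValue_le_OPT (h : IsFeasible T O S M A C a b c) :
    flowValue T O a ≤ OPT T O S M A C := by
  refine le_csSup ⟨∑ t ∈ T, ∑ v ∈ O, A t v, ?_⟩ ⟨a, b, c, h, rfl⟩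
  rintro _ ⟨_, _, _, h', rfl⟩
  exact h'.flowValue_le_sum_demand

theorem OPT_nonneg : 0 ≤ OPT T O S M A C := by
  refine Real.sSup_nonneg ?_
  rintro _ ⟨_, _, _, h, rfl⟩
  exact h.flowValue_nonneg

theorem OPT_le_sum_demand (hA : ∀ t ∈ T, ∀ v ∈ O, 0 ≤ A t v) :
    OPT T O S M A C ≤ ∑ t ∈ T, ∑ v ∈ O, A t v := by
  refine Real.sSup_le ?_ (sum_nonneg fun t ht => sum_nonneg (hA t ht))
  rintro _ ⟨_, _, _, h, rfl⟩
  exact h.flowValue_le_sum_demand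

theorem IsFeasible.sum_periods {κ : Type*} (T' : Finset κ) (h : IsFeasible T O S M A C a b c) :
    IsFeasible T' O S M (fun _ v => ∑ t ∈ T, A t v) (fun s => (T.card : ℝ) * C s)
      (fun _ v => ∑ t ∈ T, a t v) (fun _ p => ∑ t ∈ T, b t p) (fun _ s => ∑ t ∈ T, c t s) := by
  choose hM hout hin ha hb hc using h
  refine fun _ _ => ⟨fun p hp => ?_, fun v hv => ?_, fun s hs => ?_, fun v hv => ⟨?_, ?_⟩,
    fun p => ?_, fun s hs => ⟨?_, ?_⟩⟩
  · exact sum_eq_zero fun t ht => hM t ht p hp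
  · exact (sum_congr rfl fun t ht => hout t ht v hv).trans sum_comm
  · exact sum_comm.trans (sum_congr rfl fun t ht => hin t ht s hs)
  · exact sum_nonneg fun t ht => (ha t ht v hv).1
  · exact sum_le_sum fun t ht => (ha t ht v hv).2
  · exact sum_nonneg fun t ht => hb t ht p
  · exact sum_nonneg fun t ht => (hc t ht s hs).1
  · exact (sum_le_card_nsmul T _ _ fun t ht => (hc t ht s hs).2).trans_eq (nsmul_eq_mul _ _)

theorem OPT_le_OPT_sum_periods {κ : Type*} (t₀ : κ) :
    OPT T O S M A C ≤
      OPT {t₀} O S M (fun _ v => ∑ t ∈ T, A t v) (fun s => (T.card : ℝ) * C s) := by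
  -- `OPT_nonneg` covers networks without a feasible flow, where `OPT` is `sSup ∅ = 0`.
  refine Real.sSup_le ?_ OPT_nonneg
  rintro _ ⟨a, b, c, h, rfl⟩
  rw [← flowValue_singleton_sum_periods T O a t₀]
  exact (h.sum_periods {t₀}).flowValue_le_OPT

end Flow

section Expansion

variable {β : Type*} [DecidableEq β] {S S₂ : Finset β} {C P : β → ℝ} {Y : β → ℕ} {Y2 Y3 : ℕ}
  {K I2 I3 J2 J3 : β → ℝ} {G : ℝ}

theorem expCap_mul_left (r : ℝ) (S : Finset β) (C P : β → ℝ) (Q2 Q3 : ℝ) (x y2 y3 : β → ℕ) :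
    expCap S (fun s => r * C s) (fun s => r * P s) (r * Q2) (r * Q3) x y2 y3 =
      fun s => r * expCap S C P Q2 Q3 x y2 y3 s := by
  funext s
  simp only [expCap]
  split_ifs <;> ring

theorem expFeasible_mul_left_iff {r : ℝ} (hr : r ≠ 0) {x y2 y3 z2 z3 : β → ℕ} :
    ExpFeasible S S₂ (fun s => r * C s) (fun s => r * P s) Y Y2 Y3 K I2 I3 J2 J3 G x y2 y3 z2 z3 ↔
      ExpFeasible S S₂ C P Y Y2 Y3 K I2 I3 J2 J3 G x y2 y3 z2 z3 := by
  simp only [ExpFeasible, mul_div_mul_left _ _ hr]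

theorem expFeasible_zero (hYC : ∀ s ∈ S, C s / P s ≤ (Y s : ℝ)) (hG : 0 ≤ G) :
    ExpFeasible S S₂ C P Y Y2 Y3 K I2 I3 J2 J3 G 0 0 0 0 0 := by
  simpa [ExpFeasible, hG] using hYC

variable {ι α : Type*} [DecidableEq α] {T : Finset ι} {O : Finset α} {M M₂ : Finset (α × β)}
  {A : ι → α → ℝ} {Q2 Q3 : ℝ}

theorem ExpFeasible.OPT_le_OPTMILP (hA : ∀ t ∈ T, ∀ v ∈ O, 0 ≤ A t v) {x y2 y3 z2 z3 : β → ℕ}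
    (h : ExpFeasible S S₂ C P Y Y2 Y3 K I2 I3 J2 J3 G x y2 y3 z2 z3) :
    OPT T O (S ∪ S₂) (M ∪ M₂) A (expCap S C P Q2 Q3 x y2 y3) ≤
      OPTMILP T O S M A C S₂ M₂ P Q2 Q3 Y Y2 Y3 K I2 I3 J2 J3 G := by
  refine le_csSup ⟨∑ t ∈ T, ∑ v ∈ O, A t v, ?_⟩ ⟨x, y2, y3, z2, z3, h, rfl⟩
  rintro _ ⟨_, _, _, _, _, _, rfl⟩
  exact OPT_le_sum_demand hA

end Expansion

theorem stmt16_general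
    {ι κ α β : Type*} [DecidableEq α] [DecidableEq β]
    (T : Finset ι) (O : Finset α) (S : Finset β) (M : Finset (α × β))
    (A : ι → α → ℝ) (C : β → ℝ)
    (hT : T.Nonempty) (hA : ∀ t ∈ T, ∀ v ∈ O, 0 ≤ A t v)
    (S₂ : Finset β) (M₂ : Finset (α × β)) (P : β → ℝ) (Q2 Q3 : ℝ)
    (Y : β → ℕ) (Y2 Y3 : ℕ) (K I2 I3 J2 J3 : β → ℝ) (G : ℝ)
    (hne : ∃ x y2 y3 z2 z3, ExpFeasible S S₂ C P Y Y2 Y3 K I2 I3 J2 J3 G x y2 y3 z2 z3)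
    (t₀ : κ) :
    (∀ x y2 y3 z2 z3,
      ExpFeasible S S₂ C P Y Y2 Y3 K I2 I3 J2 J3 G x y2 y3 z2 z3 →
        OPT T O (S ∪ S₂) (M ∪ M₂) A (expCap S C P Q2 Q3 x y2 y3) ≤
          OPT {t₀} O (S ∪ S₂) (M ∪ M₂) (fun _ v => ∑ t ∈ T, A t v)
            (fun s => (T.card : ℝ) * expCap S C P Q2 Q3 x y2 y3 s)) ∧
      OPTMILP T O S M A C S₂ M₂ P Q2 Q3 Y Y2 Y3 K I2 I3 J2 J3 G ≤
        OPTMILP {t₀} O S M (fun _ v => ∑ t ∈ T, A t v) (fun s => (T.card : ℝ) * C s)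
          S₂ M₂ (fun s => (T.card : ℝ) * P s) ((T.card : ℝ) * Q2) ((T.card : ℝ) * Q3)
          Y Y2 Y3 K I2 I3 J2 J3 G := by
  refine ⟨fun _ _ _ _ _ _ => OPT_le_OPT_sum_periods t₀, ?_⟩
  have hcard : (T.card : ℝ) ≠ 0 := Nat.cast_ne_zero.mpr hT.card_ne_zero
  obtain ⟨x₀, y2₀, y3₀, z2₀, z3₀, h₀⟩ := hne
  refine csSup_le ⟨_, x₀, y2₀, y3₀, z2₀, z3₀, h₀, rfl⟩ ?_
  rintro _ ⟨x, y2, y3, z2, z3, h, rfl⟩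
  refine (OPT_le_OPT_sum_periods t₀).trans ?_
  rw [← expCap_mul_left]
  exact ((expFeasible_mul_left_iff hcard).mpr h).OPT_le_OPTMILP
    fun _ _ v hv => sum_nonneg fun t ht => hA t ht v hv

/-- The single-period time-aggregated relaxation of the location-and-sizing problem
overestimates its multi-period optimal value, both decision-wise and for the
optimal values. -/
theorem stmt16
    {ι α β : Type*} [DecidableEq α] [DecidableEq β]
    (T : Finset ι) (O : Finset α) (S : Finset β) (M : Finset (α × β))
    (A : ι → α → ℝ) (C : β → ℝ)
    (hT : T.Nonempty) (hM : M ⊆ O ×ˢ S)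
    (hA : ∀ t ∈ T, ∀ v ∈ O, 0 ≤ A t v) (hC : ∀ s ∈ S, 0 ≤ C s)
    (S₂ : Finset β) (M₂ : Finset (α × β))
    (hSS₂ : Disjoint S S₂) (hM₂ : M₂ ⊆ O ×ˢ S₂)
    (P : β → ℝ) (hP : ∀ s ∈ S, 0 < P s)
    (Q2 Q3 : ℝ) (hQ2 : 0 ≤ Q2) (hQ3 : 0 ≤ Q3)
    (Y : β → ℕ) (Y2 Y3 : ℕ)
    (hYC : ∀ s ∈ S, C s / P s ≤ (Y s : ℝ))
    (K I2 I3 J2 J3 : β → ℝ)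
    (hK : ∀ s ∈ S, 0 ≤ K s)
    (hI2 : ∀ e ∈ S₂, 0 ≤ I2 e) (hI3 : ∀ e ∈ S₂, 0 ≤ I3 e)
    (hJ2 : ∀ e ∈ S₂, 0 ≤ J2 e) (hJ3 : ∀ e ∈ S₂, 0 ≤ J3 e)
    (G : ℝ) (hG : 0 ≤ G) (t₀ : ι) :
    (∀ x y2 y3 z2 z3,
      ExpFeasible S S₂ C P Y Y2 Y3 K I2 I3 J2 J3 G x y2 y3 z2 z3 →
        OPT T O (S ∪ S₂) (M ∪ M₂) A (expCap S C P Q2 Q3 x y2 y3) ≤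
          OPT {t₀} O (S ∪ S₂) (M ∪ M₂) (fun _ v => ∑ t ∈ T, A t v)
            (fun s => (T.card : ℝ) * expCap S C P Q2 Q3 x y2 y3 s)) ∧
      OPTMILP T O S M A C S₂ M₂ P Q2 Q3 Y Y2 Y3 K I2 I3 J2 J3 G ≤
        OPTMILP {t₀} O S M (fun _ v => ∑ t ∈ T, A t v) (fun s => (T.card : ℝ) * C s)
          S₂ M₂ (fun s => (T.card : ℝ) * P s) ((T.card : ℝ) * Q2) ((T.card : ℝ) * Q3)
          Y Y2 Y3 K I2 I3 J2 J3 G :=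
  stmt16_general T O S M A C hT hA S₂ M₂ P Q2 Q3 Y Y2 Y3 K I2 I3 J2 J3 G
    ⟨0, 0, 0, 0, 0, expFeasible_zero hYC hG⟩ t₀
end
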